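/- Let q be a prime power, let n ≥ 1, let s be an integer with gcd(s,n) = 1, and put σ = q^s. Let f(x) = Σ_{i=0}^{n−1} a_i x^{σ^i} ∈ F_{q^n}[x]. Then for 0 ≤ μ ≤ n−1: the F_q-dimension of the kernel of the F_q-linear transformation of F_{q^n} induced by f equals μ if and only if det(D_{0,σ}(f)) = det(D_{1,σ}(f)) = … = det(D_{μ−1,σ}(f)) = 0 and det(D_{μ,σ}(f)) ≠ 0. -/

import Mathlib

/-!
Let `φ` generate the Galois group of a cyclic extension `F / K` of degree `n`. Two facts carry the
proof.

* A nonzero operator `g = ∑_{i<d} c_i φ^i` has a kernel of `K`-dimension less than `d`: if `v ≠ 0`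
  lies in the kernel, right division gives `g = h ∘ (φ - φ(v) / v)` with `h` of degree less than
  `d - 1`, and `φ - φ(v) / v` has a one-dimensional kernel.
* By Dedekind, `1, φ, …, φ^(n-1)` is an `F`-basis of `End_K(F)`, and in this basis `g ↦ g ∘ f` is
  multiplication of coefficient rows by the Dickson matrix of `f`. So `det D_m = 0` means that some
  `g ≠ 0` of degree less than `n - m` has `g ∘ f` of degree less than `m`.

Put `k = dim ker f`. If `m < k`, such a `g` exists already with `g ∘ f = 0`, because
`dim_F Hom_K(im f, F) = n - k < n - m`. If `m = k`, then `g ∘ f` vanishes on the `k`-dimensional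
space `ker f`, so `g ∘ f = 0`; hence `g` vanishes on the `(n - k)`-dimensional space `im f` and
`g = 0`. Thus `k` is the least `m` with `det D_m ≠ 0`.
-/

/-- `D_{m,σ}(f)`: the `(n-m) × (n-m)` matrix obtained from the `σ`-Dickson matrix of
`f = ∑_{i=0}^{n-1} a_i x^{σ^i}` by removing its first `m` columns and last `m` rows;
entry `(i,j)` is `a_((j+m-i) mod n) ^ (σ ^ i)` (here the first argument plays the
role of `σ`). -/
noncomputable def dickSub (σ n m : ℕ) {F : Type*} [Field F] (a : ℕ → F) :
    Matrix (Fin (n - m)) (Fin (n - m)) F :=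
  Matrix.of fun i j => a ((j.val + m + n - i.val) % n) ^ σ ^ i.val

open Module Matrix

section LinearAlgebra

theorem finrank_ker_comp_le {K V V₂ V₃ : Type*} [DivisionRing K] [AddCommGroup V] [Module K V]
    [AddCommGroup V₂] [Module K V₂] [AddCommGroup V₃] [Module K V₃] [FiniteDimensional K V]
    [FiniteDimensional K V₂] (h : V₂ →ₗ[K] V₃) (t : V →ₗ[K] V₂) :
    finrank K (h ∘ₗ t).ker ≤ finrank K h.ker + finrank K t.ker := by
  have hker : finrank K (t.domRestrict (h ∘ₗ t).ker).ker = finrank K t.ker := by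
    rw [LinearMap.ker_domRestrict]
    exact (Submodule.comapSubtypeEquivOfLe (LinearMap.ker_le_ker_comp t h)).finrank_eq
  have hrange : finrank K (t.domRestrict (h ∘ₗ t).ker).range ≤ finrank K h.ker := by
    rw [LinearMap.range_domRestrict, LinearMap.ker_comp]
    exact Submodule.finrank_mono (Submodule.map_comap_le _ _)
  rw [← LinearMap.finrank_range_add_finrank_ker (t.domRestrict (h ∘ₗ t).ker), hker]
  exact Nat.add_le_add_right hrange _

/-- The block of `A` left after removing its first `m` columns and its last `m` rows; for `A` a
Dickson matrix this is `D_m`. It is empty for `n ≤ m`. -/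
def upperRightBlock {R : Type*} {n : ℕ} (A : Matrix (Fin n) (Fin n) R) (m : ℕ) :
    Matrix (Fin (n - m)) (Fin (n - m)) R :=
  A.submatrix (Fin.castLE (n.sub_le m)) fun j => ⟨j + m, by omega⟩

theorem vecMul_upperRightBlock {R : Type*} [NonUnitalNonAssocSemiring R] {n m : ℕ}
    (A : Matrix (Fin n) (Fin n) R) {c : Fin n → R} (hc : ∀ i : Fin n, n - m ≤ i → c i = 0) :
    (c ∘ Fin.castLE (n.sub_le m)) ᵥ* upperRightBlock A m =
      fun j : Fin (n - m) => (c ᵥ* A) ⟨j + m, by omega⟩ := by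
  funext j
  refine Fintype.sum_of_injective _ (Fin.castLE_injective (n.sub_le m)) _ _ (fun i hi => ?_)
    fun i => rfl
  rw [hc i (by simpa [Fin.range_castLE] using hi), zero_mul]

theorem det_upperRightBlock_eq_zero_iff {R : Type*} [CommRing R] [IsDomain R] {n m : ℕ}
    (A : Matrix (Fin n) (Fin n) R) :
    (upperRightBlock A m).det = 0 ↔ ∃ c : Fin n → R, c ≠ 0 ∧ (∀ i : Fin n, n - m ≤ i → c i = 0) ∧
      ∀ j : Fin n, m ≤ j → (c ᵥ* A) j = 0 := by
  rw [← exists_vecMul_eq_zero_iff]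
  constructor
  · rintro ⟨w, hw0, hw⟩
    have hinj := Fin.castLE_injective (n.sub_le m)
    let c : Fin n → R := Function.extend (Fin.castLE (n.sub_le m)) w 0
    have hcw : c ∘ Fin.castLE (n.sub_le m) = w := funext (hinj.extend_apply w 0)
    have hc : ∀ i : Fin n, n - m ≤ i → c i = 0 := fun i hi =>
      Function.extend_apply' _ _ _ (by rintro ⟨j, rfl⟩; exact hi.not_gt j.isLt)
    refine ⟨c, fun h0 => hw0 (by rw [← hcw, h0]; rfl), hc, fun j hj => ?_⟩
    rw [← hcw, vecMul_upperRightBlock A hc] at hw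
    simpa [Nat.sub_add_cancel hj] using congrFun hw ⟨j - m, by omega⟩
  · rintro ⟨c, hc0, hc, hcA⟩
    refine ⟨c ∘ Fin.castLE (n.sub_le m), fun h0 => hc0 (funext fun i => ?_), ?_⟩
    · rcases lt_or_ge (i : ℕ) (n - m) with hi | hi
      · exact congrFun h0 ⟨i, hi⟩
      · exact hc i hi
    · rw [vecMul_upperRightBlock A hc]
      exact funext fun j => hcA _ (Nat.le_add_left m j)

end LinearAlgebra

section LinearizedMap

variable {K F : Type*} [Field K] [Field F] [Algebra K F]

/-- The operator `∑_{i<n} a_i φ^i` on `F`. For `φ x = x ^ σ` it is the map induced by the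
`σ`-polynomial `∑_{i<n} a_i x^(σ^i)`. -/
noncomputable def linearizedMap (φ : Gal(F/K)) {n : ℕ} (a : Fin n → F) : F →ₗ[K] F :=
  ∑ i, a i • (φ ^ (i : ℕ)).toLinearMap

/-- The `F`-space of operators `∑_{i<d} c_i φ^i` of `φ`-degree less than `d`. -/
def linearizedDegreeLT (φ : Gal(F/K)) (d : ℕ) : Submodule F (F →ₗ[K] F) :=
  Submodule.span F (Set.range fun i : Fin d => (φ ^ (i : ℕ)).toLinearMap)

/-- The Dickson matrix of `∑_{i<n} a_i φ^i`. The index `j - i` is taken modulo `n`, which is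
subtraction in `Fin n`. -/
def dicksonMatrix (φ : Gal(F/K)) {n : ℕ} (a : Fin n → F) : Matrix (Fin n) (Fin n) F :=
  of fun i j => (φ ^ (i : ℕ)) (a (j - i))

theorem linearizedMap_apply (φ : Gal(F/K)) {n : ℕ} (a : Fin n → F) (x : F) :
    linearizedMap φ a x = ∑ i, a i * (φ ^ (i : ℕ)) x := by
  simp [linearizedMap]

theorem pow_mem_linearizedDegreeLT (φ : Gal(F/K)) {i d : ℕ} (hi : i < d) :
    (φ ^ i).toLinearMap ∈ linearizedDegreeLT φ d :=
  Submodule.subset_span ⟨⟨i, hi⟩, rfl⟩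

theorem linearizedDegreeLT_mono (φ : Gal(F/K)) {d d' : ℕ} (h : d ≤ d') :
    linearizedDegreeLT φ d ≤ linearizedDegreeLT φ d' :=
  Submodule.span_le.2 (Set.range_subset_iff.2 fun i =>
    pow_mem_linearizedDegreeLT φ (i.isLt.trans_le h))

theorem pow_eq_comp_sub_smul_add_smul (φ : Gal(F/K)) (α : F) (i : ℕ) :
    ∃ h ∈ linearizedDegreeLT φ i, ∃ r : F, (φ ^ i).toLinearMap =
      h ∘ₗ (φ.toLinearMap - α • LinearMap.id) + r • LinearMap.id := by
  induction i with
  | zero => exact ⟨0, zero_mem _, 1, by ext; simp⟩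
  | succ i ih =>
    obtain ⟨h, hh, r, hr⟩ := ih
    have hstep : (φ ^ (i + 1)).toLinearMap =
        (φ ^ i).toLinearMap ∘ₗ (φ.toLinearMap - α • LinearMap.id) +
          (φ ^ i) α • (φ ^ i).toLinearMap := by
      ext x
      simp [pow_succ]
    refine ⟨(φ ^ i).toLinearMap + (φ ^ i) α • h,
      add_mem (pow_mem_linearizedDegreeLT φ i.lt_succ_self)
        (Submodule.smul_mem _ _ (linearizedDegreeLT_mono φ i.le_succ hh)), (φ ^ i) α * r, ?_⟩
    calc (φ ^ (i + 1)).toLinearMap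
        = (φ ^ i).toLinearMap ∘ₗ (φ.toLinearMap - α • LinearMap.id) +
            (φ ^ i) α • (h ∘ₗ (φ.toLinearMap - α • LinearMap.id) + r • LinearMap.id) := by
          rw [hstep, ← hr]
      _ = _ := by rw [LinearMap.add_comp, LinearMap.smul_comp, smul_add, smul_smul, add_assoc]

theorem exists_eq_comp_sub_smul_add_smul (φ : Gal(F/K)) (α : F) {d : ℕ} {g : F →ₗ[K] F}
    (hg : g ∈ linearizedDegreeLT φ (d + 1)) :
    ∃ h ∈ linearizedDegreeLT φ d, ∃ r : F,
      g = h ∘ₗ (φ.toLinearMap - α • LinearMap.id) + r • LinearMap.id := by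
  induction hg using Submodule.span_induction with
  | mem g hg =>
    obtain ⟨i, rfl⟩ := hg
    obtain ⟨h, hh, r, hr⟩ := pow_eq_comp_sub_smul_add_smul φ α i
    exact ⟨h, linearizedDegreeLT_mono φ (Nat.lt_succ_iff.1 i.isLt) hh, r, hr⟩
  | zero => exact ⟨0, zero_mem _, 0, by simp⟩
  | add g g' _ _ ihg ihg' =>
    obtain ⟨h, hh, r, rfl⟩ := ihg
    obtain ⟨h', hh', r', rfl⟩ := ihg'
    exact ⟨h + h', add_mem hh hh', r + r', by rw [LinearMap.add_comp, add_smul]; abel⟩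
  | smul b g _ ihg =>
    obtain ⟨h, hh, r, rfl⟩ := ihg
    exact ⟨b • h, Submodule.smul_mem _ _ hh, b * r, by
      rw [LinearMap.smul_comp, smul_add, smul_smul]⟩

theorem ker_sub_smul_le_span_singleton (φ : Gal(F/K))
    (hfix : ∀ x, φ x = x → x ∈ (algebraMap K F).range) {v : F} (hv : v ≠ 0) :
    (φ.toLinearMap - (φ v / v) • LinearMap.id).ker ≤ Submodule.span K {v} := by
  intro x hx
  have hx' : φ x = φ v / v * x := by simpa [sub_eq_zero] using hx
  have hφv : φ v ≠ 0 := (map_ne_zero φ).2 hv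
  obtain ⟨k, hk⟩ := hfix (x / v) (by rw [map_div₀, hx']; field_simp)
  exact Submodule.mem_span_singleton.2 ⟨k, by rw [Algebra.smul_def, hk, div_mul_cancel₀ x hv]⟩

theorem finrank_ker_lt_of_mem_linearizedDegreeLT [FiniteDimensional K F] {φ : Gal(F/K)}
    (hfix : ∀ x, φ x = x → x ∈ (algebraMap K F).range) {d : ℕ} {g : F →ₗ[K] F}
    (hg : g ∈ linearizedDegreeLT φ d) (hg0 : g ≠ 0) : finrank K g.ker < d := by
  induction d generalizing g with
  | zero => simp [linearizedDegreeLT, hg0] at hg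
  | succ d ih =>
    by_cases hbot : g.ker = ⊥
    · rw [hbot, finrank_bot]
      exact d.succ_pos
    obtain ⟨v, hv, hv0⟩ := (Submodule.ne_bot_iff _).1 hbot
    obtain ⟨h, hh, r, rfl⟩ := exists_eq_comp_sub_smul_add_smul φ (φ v / v) hg
    have hr : r = 0 := by simpa [hv0] using hv
    rw [hr, zero_smul, add_zero] at hg0 ⊢
    have hcofactor : finrank K h.ker < d := ih hh fun h0 => hg0 (by rw [h0, LinearMap.zero_comp])
    have hlinear : finrank K (φ.toLinearMap - (φ v / v) • LinearMap.id).ker ≤ 1 :=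
      (Submodule.finrank_mono (ker_sub_smul_le_span_singleton φ hfix hv0)).trans
        (finrank_span_singleton hv0).le
    have := finrank_ker_comp_le h (φ.toLinearMap - (φ v / v) • LinearMap.id)
    omega

theorem pow_comp_linearizedMap (φ : Gal(F/K)) {n : ℕ} (hφ : φ ^ n = 1) (a : Fin n → F)
    (i : Fin n) :
    (φ ^ (i : ℕ)).toLinearMap ∘ₗ linearizedMap φ a = linearizedMap φ (dicksonMatrix φ a i) := by
  have : NeZero n := ⟨i.pos.ne'⟩
  ext x
  rw [LinearMap.comp_apply, AlgEquiv.toLinearMap_apply, linearizedMap_apply, linearizedMap_apply,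
    map_sum]
  refine Fintype.sum_equiv (Equiv.addRight i) _ _ fun l => ?_
  have hpow : φ ^ ((l + i : Fin n) : ℕ) = φ ^ (i : ℕ) * φ ^ (l : ℕ) := by
    rw [Fin.val_add, ← pow_eq_pow_mod _ hφ, ← pow_add, add_comm]
  rw [Equiv.coe_addRight, hpow, dicksonMatrix, of_apply, add_sub_cancel_right, map_mul,
    AlgEquiv.mul_apply]

theorem linearizedMap_comp_linearizedMap (φ : Gal(F/K)) {n : ℕ} (hφ : φ ^ n = 1)
    (c a : Fin n → F) :
    linearizedMap φ c ∘ₗ linearizedMap φ a = linearizedMap φ (c ᵥ* dicksonMatrix φ a) := by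
  have hrow (i : Fin n) (x : F) : (φ ^ (i : ℕ)) (linearizedMap φ a x) =
      ∑ j, dicksonMatrix φ a i j * (φ ^ (j : ℕ)) x :=
    (LinearMap.congr_fun (pow_comp_linearizedMap φ hφ a i) x).trans (linearizedMap_apply ..)
  ext x
  simp only [LinearMap.comp_apply, linearizedMap_apply φ c, hrow, Finset.mul_sum,
    linearizedMap_apply φ (c ᵥ* _), vecMul, dotProduct, Finset.sum_mul, mul_assoc]
  exact Finset.sum_comm

theorem linearIndependent_toLinearMap_pow (φ : Gal(F/K)) {d : ℕ} (hd : d ≤ orderOf φ) :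
    LinearIndependent F fun i : Fin d => (φ ^ (i : ℕ)).toLinearMap := by
  refine (linearIndependent_toLinearMap K F F).comp
    (fun i : Fin d => ((φ ^ (i : ℕ) : Gal(F/K)) : F →ₐ[K] F)) fun i j hij => Fin.ext ?_
  exact pow_injOn_Iio_orderOf (i.isLt.trans_le hd) (j.isLt.trans_le hd)
    (AlgEquiv.coe_toAlgHom_injective hij)

theorem exists_mem_linearizedDegreeLT_comp_eq_zero [FiniteDimensional K F] (φ : Gal(F/K))
    (f : F →ₗ[K] F) {d : ℕ} (hd : d ≤ orderOf φ) (hf : finrank K f.range < d) :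
    ∃ g ∈ linearizedDegreeLT φ d, g ≠ 0 ∧ g ∘ₗ f = 0 := by
  let restrict : linearizedDegreeLT φ d →ₗ[F] f.range →ₗ[K] F :=
    (LinearMap.lcomp F F f.range.subtype).domRestrict (linearizedDegreeLT φ d)
  have hlt : finrank F (f.range →ₗ[K] F) < finrank F (linearizedDegreeLT φ d) := by
    rwa [finrank_linearMap_self, linearizedDegreeLT,
      finrank_span_eq_card (linearIndependent_toLinearMap_pow φ hd), Fintype.card_fin]
  have hker : restrict.ker ≠ ⊥ := LinearMap.ker_ne_bot_of_finrank_lt (K := F)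
    (V := linearizedDegreeLT φ d) (V₂ := f.range →ₗ[K] F) hlt
  obtain ⟨g, hg, hg0⟩ := (Submodule.ne_bot_iff _).1 hker
  exact ⟨g, g.2, fun h0 => hg0 (Subtype.ext h0),
    LinearMap.ext fun x => LinearMap.congr_fun hg ⟨f x, x, rfl⟩⟩

theorem eq_zero_of_comp_mem_linearizedDegreeLT [FiniteDimensional K F] {φ : Gal(F/K)}
    (hfix : ∀ x, φ x = x → x ∈ (algebraMap K F).range) {f g : F →ₗ[K] F}
    (hg : g ∈ linearizedDegreeLT φ (finrank K F - finrank K f.ker))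
    (hgf : g ∘ₗ f ∈ linearizedDegreeLT φ (finrank K f.ker)) : g = 0 := by
  have hcomp : g ∘ₗ f = 0 := by
    by_contra h0
    exact (finrank_ker_lt_of_mem_linearizedDegreeLT hfix hgf h0).not_ge
      (Submodule.finrank_mono (LinearMap.ker_le_ker_comp f g))
  by_contra h0
  have hker := finrank_ker_lt_of_mem_linearizedDegreeLT hfix hg h0
  have hrange := Submodule.finrank_mono (LinearMap.range_le_ker_iff.2 hcomp)
  have := f.finrank_range_add_finrank_ker
  omega

end LinearizedMap

section CyclicExtension

variable {K F : Type*} [Field K] [Field F] [Algebra K F] [FiniteDimensional K F] {φ : Gal(F/K)}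

theorem mem_range_algebraMap_of_apply_eq_self (hφ : orderOf φ = finrank K F) {x : F}
    (hx : φ x = x) : x ∈ (algebraMap K F).range := by
  have hfixed : IntermediateField.fixedField (Subgroup.zpowers φ) = ⊥ := by
    refine (IntermediateField.eq_of_le_of_finrank_eq' bot_le ?_).symm
    rw [IntermediateField.finrank_fixedField_eq_card, Nat.card_zpowers, hφ,
      IntermediateField.finrank_bot']
  have hmem : x ∈ IntermediateField.fixedField (Subgroup.zpowers φ) := by
    rw [IntermediateField.mem_fixedField_iff]
    exact fun ψ hψ => Subgroup.zpowers_le.2 (show φ ∈ MulAction.stabilizer Gal(F/K) x from hx) hψ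
  rwa [hfixed] at hmem

/-- The `F`-basis `1, φ, …, φ^(n-1)` of `End_K(F)`, where `n = [F : K]` is the order of `φ`. -/
noncomputable def powBasis (hφ : orderOf φ = finrank K F) :
    Basis (Fin (finrank K F)) F (F →ₗ[K] F) :=
  have : Nonempty (Fin (finrank K F)) := ⟨⟨0, finrank_pos⟩⟩
  basisOfLinearIndependentOfCardEqFinrank (linearIndependent_toLinearMap_pow φ hφ.ge)
    (by rw [Fintype.card_fin, finrank_linearMap_self])

theorem powBasis_apply (hφ : orderOf φ = finrank K F) (i : Fin (finrank K F)) :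
    powBasis hφ i = (φ ^ (i : ℕ)).toLinearMap := by
  simp [powBasis]

theorem powBasis_equivFun_symm_apply (hφ : orderOf φ = finrank K F) (c : Fin (finrank K F) → F) :
    (powBasis hφ).equivFun.symm c = linearizedMap φ c := by
  simp only [Basis.equivFun_symm_apply, powBasis_apply, linearizedMap]

theorem linearizedMap_mem_linearizedDegreeLT_iff (hφ : orderOf φ = finrank K F)
    (c : Fin (finrank K F) → F) (d : ℕ) :
    linearizedMap φ c ∈ linearizedDegreeLT φ d ↔ ∀ j : Fin (finrank K F), d ≤ j → c j = 0 := by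
  constructor
  · intro h j hj
    have hle : linearizedDegreeLT φ d ≤ Submodule.span F (powBasis hφ '' {i | (i : ℕ) < d}) := by
      refine Submodule.span_le.2 (Set.range_subset_iff.2 fun i => Submodule.subset_span ?_)
      exact ⟨⟨i, i.isLt.trans (hj.trans_lt j.isLt)⟩, i.isLt, powBasis_apply hφ _⟩
    have hsupp := (powBasis hφ).mem_span_image.1 (hle h)
    have hcoeff : (powBasis hφ).repr (linearizedMap φ c) j = c j := by
      rw [← Basis.equivFun_apply, ← powBasis_equivFun_symm_apply hφ, LinearEquiv.apply_symm_apply]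
    by_contra h0
    exact hj.not_gt (hsupp (Finsupp.mem_support_iff.2 (hcoeff.trans_ne h0)))
  · refine fun h => Submodule.sum_mem _ fun j _ => ?_
    rcases lt_or_ge (j : ℕ) d with hj | hj
    · exact Submodule.smul_mem _ _ (pow_mem_linearizedDegreeLT φ hj)
    · rw [h j hj, zero_smul]
      exact zero_mem _

theorem det_upperRightBlock_dicksonMatrix_eq_zero_iff (hφ : orderOf φ = finrank K F)
    (a : Fin (finrank K F) → F) (m : ℕ) :
    (upperRightBlock (dicksonMatrix φ a) m).det = 0 ↔
      ∃ g ∈ linearizedDegreeLT φ (finrank K F - m),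
        g ≠ 0 ∧ g ∘ₗ linearizedMap φ a ∈ linearizedDegreeLT φ m := by
  have hpow : φ ^ finrank K F = 1 := hφ ▸ pow_orderOf_eq_one φ
  rw [det_upperRightBlock_eq_zero_iff, (powBasis hφ).equivFun.symm.surjective.exists]
  refine exists_congr fun c => ?_
  rw [LinearEquiv.map_ne_zero_iff, powBasis_equivFun_symm_apply,
    linearizedMap_comp_linearizedMap φ hpow, linearizedMap_mem_linearizedDegreeLT_iff hφ,
    linearizedMap_mem_linearizedDegreeLT_iff hφ, and_left_comm]

theorem stmt_7_general (hφ : orderOf φ = finrank K F) (a : Fin (finrank K F) → F) (μ : ℕ) :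
    finrank K (linearizedMap φ a).ker = μ ↔
      (∀ m < μ, (upperRightBlock (dicksonMatrix φ a) m).det = 0) ∧
        (upperRightBlock (dicksonMatrix φ a) μ).det ≠ 0 := by
  set k := finrank K (linearizedMap φ a).ker
  have hzero : ∀ m < k, (upperRightBlock (dicksonMatrix φ a) m).det = 0 := by
    intro m hm
    have hrank := (linearizedMap φ a).finrank_range_add_finrank_ker
    obtain ⟨g, hg, hg0, hgf⟩ := exists_mem_linearizedDegreeLT_comp_eq_zero φ (linearizedMap φ a)
      (d := finrank K F - m) (hφ ▸ Nat.sub_le _ _) (by omega)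
    exact (det_upperRightBlock_dicksonMatrix_eq_zero_iff hφ a m).2
      ⟨g, hg, hg0, hgf ▸ zero_mem _⟩
  have hne : (upperRightBlock (dicksonMatrix φ a) k).det ≠ 0 := by
    rw [Ne, det_upperRightBlock_dicksonMatrix_eq_zero_iff hφ]
    rintro ⟨g, hg, hg0, hgf⟩
    exact hg0 (eq_zero_of_comp_mem_linearizedDegreeLT
      (fun x => mem_range_algebraMap_of_apply_eq_self hφ) hg hgf)
  constructor
  · rintro rfl
    exact ⟨hzero, hne⟩
  · rintro ⟨hzero', hne'⟩
    exact le_antisymm (not_lt.1 fun h => hne' (hzero μ h)) (not_lt.1 fun h => hne (hzero' k h))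

end CyclicExtension

section FiniteField

theorem exists_subfield_natCard_eq_pow {p k m : ℕ} (hp : p.Prime) {F : Type*} [Field F]
    (hF : Nat.card F = p ^ k) (hm : m ∣ k) : ∃ K : Subfield F, Nat.card K = p ^ m := by
  have : Fact p.Prime := ⟨hp⟩
  have : Finite F := Nat.finite_of_card_ne_zero (by rw [hF]; exact pow_ne_zero k hp.ne_zero)
  have : Fintype F := Fintype.ofFinite F
  have : CharP F p := charP_of_card_eq_prime_pow (f := k) (by rw [Fintype.card_eq_nat_card, hF])
  let _ : Algebra (ZMod p) F := ZMod.algebra F p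
  have hk : finrank (ZMod p) F = k :=
    Nat.pow_right_injective hp.two_le ((FiniteField.pow_finrank_eq_natCard p F).trans hF)
  have hm0 : m ≠ 0 := ne_zero_of_dvd_ne_zero (hk ▸ finrank_pos.ne') hm
  obtain ⟨ι⟩ := FiniteField.nonempty_algHom_of_finrank_dvd (F := ZMod p) (K := GaloisField p m)
    (L := F) (by rwa [GaloisField.finrank p hm0, hk])
  refine ⟨ι.toRingHom.fieldRange, ?_⟩
  rw [← GaloisField.card p m hm0]
  exact (Nat.card_congr ι.toRingHom.rangeRestrictFieldEquiv.toEquiv).symm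

theorem exists_subfield_natCard_eq_finrank_eq {p e n : ℕ} (hp : p.Prime) {F : Type*} [Field F]
    (hF : Nat.card F = (p ^ e) ^ n) :
    ∃ K : Subfield F, Nat.card K = p ^ e ∧ finrank K F = n := by
  have : Finite F :=
    Nat.finite_of_card_ne_zero (by rw [hF]; exact pow_ne_zero n (pow_ne_zero e hp.ne_zero))
  obtain ⟨K, hK⟩ := exists_subfield_natCard_eq_pow hp (hF.trans (pow_mul p e n).symm)
    (dvd_mul_right e n)
  refine ⟨K, hK, Nat.pow_right_injective (Finite.one_lt_card (α := K)) ?_⟩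
  exact natCard_eq_pow_finrank.symm.trans (hF.trans (by rw [hK]))

variable {K F : Type*} [Field K] [Field F] [Algebra K F]

theorem pow_apply_eq_pow_pow {φ : Gal(F/K)} {σ : ℕ} (hσ : ∀ x, φ x = x ^ σ) (i : ℕ) (x : F) :
    (φ ^ i) x = x ^ σ ^ i := by
  rw [AlgEquiv.coe_pow, funext hσ, pow_iterate]

theorem dickSub_eq_upperRightBlock {φ : Gal(F/K)} {σ : ℕ} (hσ : ∀ x, φ x = x ^ σ) (n m : ℕ)
    (a : ℕ → F) :
    dickSub σ n m a = upperRightBlock (dicksonMatrix φ fun i : Fin n => a i) m := by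
  ext i j
  have hindex : n - (i : ℕ) + (j + m) = j + m + n - i := by omega
  simp only [dickSub, upperRightBlock, dicksonMatrix, of_apply, submatrix_apply, Fin.val_castLE,
    Fin.val_sub, hindex, pow_apply_eq_pow_pow hσ]

theorem orderOf_frobeniusAlgEquivOfAlgebraic_pow [Fintype K] [Finite F] {s : ℕ}
    (hs : s.Coprime (finrank K F)) :
    orderOf (FiniteField.frobeniusAlgEquivOfAlgebraic K F ^ s) = finrank K F := by
  rw [Nat.Coprime.orderOf_pow, FiniteField.orderOf_frobeniusAlgEquivOfAlgebraic]
  rwa [FiniteField.orderOf_frobeniusAlgEquivOfAlgebraic, Nat.coprime_comm]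

theorem natCard_zeros_eq_pow_iff_det_dickSub [Finite F] {s : ℕ} (hs : s.Coprime (finrank K F))
    (a : ℕ → F) (μ : ℕ) :
    Nat.card {x : F // ∑ i ∈ Finset.range (finrank K F), a i * x ^ (Nat.card K ^ s) ^ i = 0} =
        Nat.card K ^ μ ↔
      (∀ m < μ, (dickSub (Nat.card K ^ s) (finrank K F) m a).det = 0) ∧
        (dickSub (Nat.card K ^ s) (finrank K F) μ a).det ≠ 0 := by
  have : Finite K := Finite.of_injective _ (algebraMap K F).injective
  have : Fintype K := Fintype.ofFinite K
  let φ := FiniteField.frobeniusAlgEquivOfAlgebraic K F ^ s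
  have hσ (x : F) : φ x = x ^ Nat.card K ^ s := by
    rw [Nat.card_eq_fintype_card]
    exact pow_apply_eq_pow_pow
      (congrFun (FiniteField.coe_frobeniusAlgEquivOfAlgebraic K F)) s x
  have hker : Nat.card {x : F // ∑ i ∈ Finset.range (finrank K F),
      a i * x ^ (Nat.card K ^ s) ^ i = 0} =
        Nat.card K ^ finrank K (linearizedMap φ fun i : Fin (finrank K F) => a i).ker := by
    rw [← natCard_eq_pow_finrank]
    refine Nat.card_congr (Equiv.subtypeEquivRight fun x => ?_)
    simp only [LinearMap.mem_ker, linearizedMap_apply, pow_apply_eq_pow_pow hσ,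
      Finset.sum_range]
  simp only [hker, Nat.pow_right_inj Finite.one_lt_card, dickSub_eq_upperRightBlock hσ]
  exact stmt_7_general (orderOf_frobeniusAlgEquivOfAlgebraic_pow hs) _ μ

end FiniteField

/-- Corollary: for `σ = q^s` with `gcd(s,n) = 1` and
`f = ∑_{i=0}^{n-1} a_i x^{σ^i} ∈ F_{q^n}[x]`, and `0 ≤ μ ≤ n-1`: the `F_q`-dimension of
the kernel of the `F_q`-linear map induced by `f` equals `μ` (i.e. the kernel has `q^μ`
elements) iff `det D_{0,σ}(f) = ⋯ = det D_{μ-1,σ}(f) = 0` and `det D_{μ,σ}(f) ≠ 0`. -/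
theorem stmt_7 (p e q n s : ℕ) (hp : p.Prime) (he : 0 < e) (hq : q = p ^ e)
    (hn : 0 < n) (hs : Nat.gcd s n = 1)
    (F : Type*) [Field F] [Fintype F] (hF : Fintype.card F = q ^ n)
    (a : ℕ → F) (μ : ℕ) (hμ : μ ≤ n - 1) :
    Nat.card {x : F // ∑ i ∈ Finset.range n, a i * x ^ (q ^ s) ^ i = 0} = q ^ μ ↔
      (∀ m, m < μ → (dickSub (q ^ s) n m a).det = 0) ∧ (dickSub (q ^ s) n μ a).det ≠ 0 := by
  obtain ⟨K, hK, rfl⟩ := exists_subfield_natCard_eq_finrank_eq hp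
    (Nat.card_eq_fintype_card.trans (hq ▸ hF))
  exact (hK.trans hq.symm) ▸ natCard_zeros_eq_pow_iff_det_dickSub hs a μ
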